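/- arXiv:2601.15639 — 3 statements merged into one kernel-verified Lean document; each statement's English description precedes it below -/
import Mathlib

section
/- Let (G,f) be an admissible pair that is divergence-subadditive. Let p, q be pmfs on a finite set 𝒳 with p ≪ q, let n ≥ 1, and let p_{U|Xⁿ} be a randomized binary test, i.e. for each xⁿ ∈ 𝒳ⁿ a pmf p_{U|Xⁿ}(·|xⁿ) on {0,1}. Define α = ∑_{xⁿ} (∏_{i=1}^n p(x_i)) · p_{U|Xⁿ}(1|xⁿ) and β = ∑_{xⁿ} (∏_{i=1}^n q(x_i)) · p_{U|Xⁿ}(1|xⁿ), and assume 0 < β < 1. Then 𝒟_{G,f}(Bern(α)‖Bern(β)) ≤ n · 𝒟_{G,f}(p‖q), where Bern(α) denotes the pmf on {0,1} assigning probability α to 1. -/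
/-!
Write `P = ⊗ pᵢ` and `Q = ⊗ qᵢ`. Jensen's inequality gives data processing: passing `P` and `Q`
through the test can only decrease `D_f`. As `G` is non-decreasing, the divergence between the laws
of the outcome is at most `G (D_f(P‖Q))`, and subadditivity, applied one coordinate at a time,
bounds this by `∑ᵢ G (D_f(pᵢ‖qᵢ))`.

The delicate point is that `G` is monotone only below `D_m(f)`. This suffices because
`D_f(P‖Q) ≤ D_m(f) · TV(P, Q)`, where `TV(P, Q) = 1 - ∑ₓ min (P x) (Q x) < 1` as soon as `P ≪ Q`.
Hence `D_f(P‖Q) < D_m(f)`, except when `D_m(f) = 0`, where all the divergences involved vanish.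
-/

open scoped BigOperators

/-- A probability mass function on a finite type: nonnegative and summing to 1. -/
def IsPMF {X : Type*} [Fintype X] (p : X → ℝ) : Prop :=
  (∀ x, 0 ≤ p x) ∧ ∑ x, p x = 1

/-- Absolute continuity `p ≪ q`: `q x = 0` implies `p x = 0`. -/
def AbsCont {X : Type*} (p q : X → ℝ) : Prop :=
  ∀ x, q x = 0 → p x = 0

/-- The f-divergence `D_f(p‖q) = ∑_{x : q(x) > 0} q(x) f(p(x)/q(x))`. -/
noncomputable def fDiv {X : Type*} [Fintype X] (f : ℝ → ℝ) (p q : X → ℝ) : ℝ :=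
  ∑ x, if 0 < q x then q x * f (p x / q x) else 0

/-- `D_m(f) = f 0 + lim_{t→∞} f t / t`, as an extended real.  For a convex `f`
with `f 1 = 0` the limit equals the supremum of the slopes `f t / (t-1)` over `t > 1`. -/
noncomputable def Dm (f : ℝ → ℝ) : EReal :=
  (f 0 : EReal) + ⨆ t : {t : ℝ // 1 < t}, ((f t.1 / (t.1 - 1) : ℝ) : EReal)

/-- An admissible pair `(G, f)`: `f` is convex on `[0,∞)` with `f 1 = 0`, and
`G : [0, D_m(f)) → [0,∞)` is non-decreasing with `G 0 = 0`. -/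
def Admissible (G f : ℝ → ℝ) : Prop :=
  ConvexOn ℝ (Set.Ici 0) f ∧ f 1 = 0 ∧ G 0 = 0 ∧
    (∀ a b : ℝ, 0 ≤ a → a ≤ b → (b : EReal) < Dm f → G a ≤ G b) ∧
    (∀ a : ℝ, 0 ≤ a → (a : EReal) < Dm f → 0 ≤ G a)

/-- The `(G,f)`-information `I_{G,f}(p_X, p_{Y|X})`: the infimum over output pmfs
`q_Y` (with `p_{Y|X=x} ≪ q_Y` for all `x`) of `∑_x p_X x • G (D_f(p_{Y|X=x}‖q_Y))`. -/
noncomputable def Igf {X Y : Type*} [Fintype X] [Fintype Y]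
    (G f : ℝ → ℝ) (pX : X → ℝ) (W : X → Y → ℝ) : ℝ :=
  sInf {v : ℝ | ∃ qY : Y → ℝ, IsPMF qY ∧ (∀ x, AbsCont (W x) qY) ∧
    v = ∑ x, pX x * G (fDiv f (W x) qY)}

/-- `(G,f)` is divergence-subadditive: for all finite alphabets and pmfs
`q_Y ≪ r_Y`, `q_Z ≪ r_Z`, one has
`G(D_f(q_Y⊗q_Z‖r_Y⊗r_Z)) ≤ G(D_f(q_Y‖r_Y)) + G(D_f(q_Z‖r_Z))`. -/
def DivSubadditive (G f : ℝ → ℝ) : Prop :=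
  ∀ (Y Z : Type) [Fintype Y] [Fintype Z] (qY rY : Y → ℝ) (qZ rZ : Z → ℝ),
    IsPMF qY → IsPMF rY → IsPMF qZ → IsPMF rZ →
    AbsCont qY rY → AbsCont qZ rZ →
    G (fDiv f (fun p : Y × Z => qY p.1 * qZ p.2) (fun p : Y × Z => rY p.1 * rZ p.2)) ≤
      G (fDiv f qY rY) + G (fDiv f qZ rZ)

section FDivergence

variable {X Y : Type*} [Fintype X] [Fintype Y] {f : ℝ → ℝ} {p q : X → ℝ}

lemma fDiv_eq_sum (f : ℝ → ℝ) (p : X → ℝ) (hq : ∀ x, 0 ≤ q x) :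
    fDiv f p q = ∑ x, q x * f (p x / q x) := by
  refine Finset.sum_congr rfl fun x _ ↦ ?_
  rcases (hq x).eq_or_lt with h | h
  · simp [← h]
  · rw [if_pos h]

lemma fDiv_comp_equiv (f : ℝ → ℝ) (e : X ≃ Y) (p q : Y → ℝ) :
    fDiv f (p ∘ e) (q ∘ e) = fDiv f p q :=
  e.sum_comp fun y ↦ if 0 < q y then q y * f (p y / q y) else 0

lemma sum_mul_map_div_sum_le_fDiv (hf : ConvexOn ℝ (Set.Ici 0) f)
    (hp : ∀ x, 0 ≤ p x) (hq : ∀ x, 0 ≤ q x) (hpq : AbsCont p q) :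
    (∑ x, q x) * f ((∑ x, p x) / ∑ x, q x) ≤ fDiv f p q := by
  rw [fDiv_eq_sum f p hq]
  rcases (Finset.sum_nonneg fun x _ ↦ hq x).eq_or_lt with h | hpos
  · have hq0 : ∀ x, q x = 0 := fun x ↦
      (Finset.sum_eq_zero_iff_of_nonneg fun x _ ↦ hq x).1 h.symm x (Finset.mem_univ x)
    simp [hq0]
  · have jensen := hf.map_centerMass_le (t := Finset.univ) (p := fun x ↦ p x / q x)
      (fun x _ ↦ hq x) hpos fun x _ ↦ div_nonneg (hp x) (hq x)
    simp only [Finset.centerMass, smul_eq_mul, Function.comp_apply,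
      fun x ↦ mul_div_cancel_of_imp' (hpq x)] at jensen
    rwa [inv_mul_eq_div, inv_mul_eq_div, le_div_iff₀' hpos] at jensen

lemma fDiv_nonneg (hf : ConvexOn ℝ (Set.Ici 0) f) (hf1 : f 1 = 0)
    (hp : IsPMF p) (hq : IsPMF q) (hpq : AbsCont p q) : 0 ≤ fDiv f p q := by
  simpa [hp.2, hq.2, hf1] using sum_mul_map_div_sum_le_fDiv hf hp.1 hq.1 hpq

end FDivergence

section Channel

variable {X Y : Type*} [Fintype X] {f : ℝ → ℝ} {p q : X → ℝ} {W : X → Y → ℝ}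

/-- The law of the output of the channel `W`, where `W x y` is the probability of the output `y`
given the input `x`, when the input has law `p`. A randomized test is a channel to `Bool`. -/
def channelOutput (p : X → ℝ) (W : X → Y → ℝ) (y : Y) : ℝ :=
  ∑ x, p x * W x y

lemma AbsCont.channelOutput (hpq : AbsCont p q) (hq : ∀ x, 0 ≤ q x) (hW : ∀ x y, 0 ≤ W x y) :
    AbsCont (channelOutput p W) (channelOutput q W) := by
  intro y hy
  have hterm := (Finset.sum_eq_zero_iff_of_nonneg fun x _ ↦ mul_nonneg (hq x) (hW x y)).1 hy
  refine Finset.sum_eq_zero fun x hx ↦ ?_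
  rcases mul_eq_zero.1 (hterm x hx) with h | h
  · rw [hpq x h, zero_mul]
  · rw [h, mul_zero]

variable [Fintype Y]

lemma IsPMF.channelOutput (hp : IsPMF p) (hW : ∀ x, IsPMF (W x)) :
    IsPMF (channelOutput p W) := by
  refine ⟨fun y ↦ Finset.sum_nonneg fun x _ ↦ mul_nonneg (hp.1 x) ((hW x).1 y), ?_⟩
  calc ∑ y, ∑ x, p x * W x y = ∑ x, p x * ∑ y, W x y := by
        rw [Finset.sum_comm]; simp only [Finset.mul_sum]
    _ = 1 := by simp [(hW _).2, hp.2]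

lemma channelOutput_bool {W : X → Bool → ℝ} (hp : IsPMF p) (hW : ∀ x, IsPMF (W x)) :
    channelOutput p W =
      fun b ↦ if b then channelOutput p W true else 1 - channelOutput p W true := by
  have hsum := (hp.channelOutput hW).2
  rw [Fintype.sum_bool] at hsum
  funext b
  cases b
  · simp [← hsum]
  · rfl

lemma fDiv_channelOutput_le (hf : ConvexOn ℝ (Set.Ici 0) f) (hp : ∀ x, 0 ≤ p x)
    (hq : ∀ x, 0 ≤ q x) (hpq : AbsCont p q) (hW : ∀ x, IsPMF (W x)) :
    fDiv f (channelOutput p W) (channelOutput q W) ≤ fDiv f p q := by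
  have hqW : ∀ x y, 0 ≤ q x * W x y := fun x y ↦ mul_nonneg (hq x) ((hW x).1 y)
  have hlogsum : ∀ y, channelOutput q W y * f (channelOutput p W y / channelOutput q W y) ≤
      fDiv f (fun x ↦ p x * W x y) (fun x ↦ q x * W x y) := fun y ↦
    sum_mul_map_div_sum_le_fDiv hf (fun x ↦ mul_nonneg (hp x) ((hW x).1 y)) (hqW · y)
      fun x h ↦ by rcases mul_eq_zero.1 h with h | h <;> simp [h, hpq x]
  have hcancel : ∀ x y, q x * W x y * f (p x * W x y / (q x * W x y)) =
      q x * f (p x / q x) * W x y := by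
    intro x y
    rcases eq_or_ne (W x y) 0 with h | h
    · simp [h]
    · rw [mul_div_mul_right _ _ h]; ring
  calc fDiv f (channelOutput p W) (channelOutput q W)
      = ∑ y, channelOutput q W y * f (channelOutput p W y / channelOutput q W y) :=
        fDiv_eq_sum f _ fun y ↦ Finset.sum_nonneg fun x _ ↦ hqW x y
    _ ≤ ∑ y, fDiv f (fun x ↦ p x * W x y) (fun x ↦ q x * W x y) :=
        Finset.sum_le_sum fun y _ ↦ hlogsum y
    _ = ∑ y, ∑ x, q x * f (p x / q x) * W x y := by
        simp only [fun y ↦ fDiv_eq_sum f (fun x ↦ p x * W x y) (hqW · y), hcancel]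
    _ = ∑ x, q x * f (p x / q x) * ∑ y, W x y := by
        rw [Finset.sum_comm]; simp only [Finset.mul_sum]
    _ = fDiv f p q := by simp only [(hW _).2, mul_one, fDiv_eq_sum f p hq]

end Channel

section MaximalValue

variable {X : Type*} [Fintype X] {f : ℝ → ℝ} {p q : X → ℝ}

lemma Dm_eq_top_or_exists_slope_bound (f : ℝ → ℝ) :
    Dm f = ⊤ ∨ ∃ S : ℝ, Dm f = (f 0 + S : ℝ) ∧ ∀ t, 1 < t → f t ≤ S * (t - 1) := by
  have hslope : ∀ t : ℝ, 1 < t → ((f t / (t - 1) : ℝ) : EReal) ≤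
      ⨆ t : {t : ℝ // 1 < t}, ((f t.1 / (t.1 - 1) : ℝ) : EReal) := fun t ht ↦
    le_iSup_of_le ⟨t, ht⟩ le_rfl
  unfold Dm
  generalize (⨆ t : {t : ℝ // 1 < t}, ((f t.1 / (t.1 - 1) : ℝ) : EReal)) = S at hslope ⊢
  induction S using EReal.rec with
  | bot => exact absurd (le_bot_iff.1 (hslope 2 one_lt_two)) (EReal.coe_ne_bot _)
  | top => exact .inl (EReal.coe_add_top _)
  | coe S =>
    refine .inr ⟨S, (EReal.coe_add _ _).symm, fun t ht ↦ ?_⟩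
    rw [← div_le_iff₀ (sub_pos.2 ht)]
    exact EReal.coe_le_coe_iff.1 (hslope t ht)

-- The right-hand side is the chord `(1 - t) * f 0` on `[0, 1]` and the line `S * (t - 1)` beyond.
lemma map_le_add_mul_sub_mul_min (hf : ConvexOn ℝ (Set.Ici 0) f) (hf1 : f 1 = 0) {S : ℝ}
    (hS : ∀ t, 1 < t → f t ≤ S * (t - 1)) {t : ℝ} (ht : 0 ≤ t) :
    f t ≤ f 0 + S * t - (f 0 + S) * min t 1 := by
  rcases le_or_gt t 1 with h | h
  · have hchord : f t ≤ (1 - t) * f 0 := by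
      simpa [hf1] using hf.2 (x := 0) (y := 1) (by simp) (by simp) (sub_nonneg.2 h) ht (by ring)
    rw [min_eq_left h]
    linarith
  · rw [min_eq_right h.le]
    linarith [hS t h]

lemma fDiv_le_mul_one_sub_sum_min (hf : ConvexOn ℝ (Set.Ici 0) f) (hf1 : f 1 = 0) {S : ℝ}
    (hS : ∀ t, 1 < t → f t ≤ S * (t - 1)) (hp : IsPMF p) (hq : IsPMF q) (hpq : AbsCont p q) :
    fDiv f p q ≤ (f 0 + S) * (1 - ∑ x, min (p x) (q x)) := by
  have hterm : ∀ x, q x * f (p x / q x) ≤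
      f 0 * q x + S * p x - (f 0 + S) * min (p x) (q x) := by
    intro x
    have hcancel := mul_div_cancel_of_imp' (hpq x)
    have hmin : q x * min (p x / q x) 1 = min (p x) (q x) := by
      rw [mul_min_of_nonneg _ _ (hq.1 x), hcancel, mul_one]
    calc q x * f (p x / q x)
        ≤ q x * (f 0 + S * (p x / q x) - (f 0 + S) * min (p x / q x) 1) :=
          mul_le_mul_of_nonneg_left
            (map_le_add_mul_sub_mul_min hf hf1 hS (div_nonneg (hp.1 x) (hq.1 x))) (hq.1 x)
      _ = f 0 * q x + S * (q x * (p x / q x)) - (f 0 + S) * (q x * min (p x / q x) 1) := by ring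
      _ = f 0 * q x + S * p x - (f 0 + S) * min (p x) (q x) := by rw [hcancel, hmin]
  calc fDiv f p q = ∑ x, q x * f (p x / q x) := fDiv_eq_sum f p hq.1
    _ ≤ ∑ x, (f 0 * q x + S * p x - (f 0 + S) * min (p x) (q x)) :=
        Finset.sum_le_sum fun x _ ↦ hterm x
    _ = (f 0 + S) * (1 - ∑ x, min (p x) (q x)) := by
        simp only [Finset.sum_sub_distrib, Finset.sum_add_distrib, ← Finset.mul_sum, hp.2, hq.2]
        ring

lemma sum_min_pos (hp : IsPMF p) (hq : ∀ x, 0 ≤ q x) (hpq : AbsCont p q) :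
    0 < ∑ x, min (p x) (q x) := by
  obtain ⟨x, -, hx⟩ : ∃ x ∈ Finset.univ, p x ≠ 0 :=
    Finset.exists_ne_zero_of_sum_ne_zero (by simp [hp.2])
  have hpx : 0 < p x := (hp.1 x).lt_of_ne' hx
  have hqx : 0 < q x := (hq x).lt_of_ne' (mt (hpq x) hx)
  exact Finset.sum_pos' (fun x _ ↦ le_min (hp.1 x) (hq x))
    ⟨x, Finset.mem_univ x, lt_min hpx hqx⟩

lemma fDiv_eq_zero_or_lt_Dm (hf : ConvexOn ℝ (Set.Ici 0) f) (hf1 : f 1 = 0)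
    (hp : IsPMF p) (hq : IsPMF q) (hpq : AbsCont p q) :
    fDiv f p q = 0 ∨ (fDiv f p q : EReal) < Dm f := by
  rcases Dm_eq_top_or_exists_slope_bound f with htop | ⟨S, hD, hS⟩
  · exact .inr (htop ▸ EReal.coe_lt_top _)
  have hTV := fDiv_le_mul_one_sub_sum_min hf hf1 hS hp hq hpq
  have hpos := sum_min_pos hp hq.1 hpq
  have hle_one : ∑ x, min (p x) (q x) ≤ 1 :=
    (Finset.sum_le_sum fun x _ ↦ min_le_left (p x) (q x)).trans_eq hp.2
  rcases le_or_gt (f 0 + S) 0 with h | h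
  · exact .inl <| le_antisymm
      (hTV.trans (mul_nonpos_of_nonpos_of_nonneg h (sub_nonneg.2 hle_one)))
      (fDiv_nonneg hf hf1 hp hq hpq)
  · rw [hD, EReal.coe_lt_coe_iff]
    exact .inr (hTV.trans_lt (mul_lt_of_lt_one_right h (sub_lt_self 1 hpos)))

lemma Admissible.map_le_map_fDiv {G : ℝ → ℝ} (hGf : Admissible G f)
    (hp : IsPMF p) (hq : IsPMF q) (hpq : AbsCont p q) {a : ℝ} (ha : 0 ≤ a)
    (hle : a ≤ fDiv f p q) : G a ≤ G (fDiv f p q) := by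
  obtain ⟨hf, hf1, -, hmono, -⟩ := hGf
  rcases fDiv_eq_zero_or_lt_Dm hf hf1 hp hq hpq with h | h
  · rw [le_antisymm (hle.trans_eq h) ha, h]
  · exact hmono a _ ha hle h

lemma Admissible.map_fDiv_channelOutput_le {Y : Type*} [Fintype Y] {G : ℝ → ℝ}
    (hGf : Admissible G f) (hp : IsPMF p) (hq : IsPMF q) (hpq : AbsCont p q) {W : X → Y → ℝ}
    (hW : ∀ x, IsPMF (W x)) :
    G (fDiv f (channelOutput p W) (channelOutput q W)) ≤ G (fDiv f p q) :=
  hGf.map_le_map_fDiv hp hq hpq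
    (fDiv_nonneg hGf.1 hGf.2.1 (hp.channelOutput hW) (hq.channelOutput hW)
      (hpq.channelOutput hq.1 fun x ↦ (hW x).1))
    (fDiv_channelOutput_le hGf.1 hp.1 hq.1 hpq hW)

end MaximalValue

section Product

/-- The product `⊗ᵢ pᵢ`: the joint law of independent variables with laws `p i`. -/
def prodPMF {ι : Type*} [Fintype ι] {X : ι → Type*} (p : ∀ i, X i → ℝ) (x : ∀ i, X i) : ℝ :=
  ∏ i, p i (x i)

lemma IsPMF.comp_equiv {X Y : Type*} [Fintype X] [Fintype Y] {p : Y → ℝ} (hp : IsPMF p)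
    (e : X ≃ Y) : IsPMF (p ∘ e) :=
  ⟨fun x ↦ hp.1 (e x), (e.sum_comp p).trans hp.2⟩

lemma IsPMF.prodPMF {ι : Type*} [Fintype ι] [DecidableEq ι] {X : ι → Type*}
    [∀ i, Fintype (X i)] {p : ∀ i, X i → ℝ} (hp : ∀ i, IsPMF (p i)) : IsPMF (prodPMF p) := by
  refine ⟨fun x ↦ Finset.prod_nonneg fun i _ ↦ (hp i).1 (x i), ?_⟩
  calc ∑ x : ∀ i, X i, ∏ i, p i (x i) = ∏ i, ∑ a, p i a := by
        rw [Finset.prod_univ_sum, Fintype.piFinset_univ]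
    _ = 1 := Finset.prod_eq_one fun i _ ↦ (hp i).2

lemma AbsCont.prodPMF {ι : Type*} [Fintype ι] {X : ι → Type*} {p q : ∀ i, X i → ℝ}
    (hpq : ∀ i, AbsCont (p i) (q i)) : AbsCont (prodPMF p) (prodPMF q) := by
  intro x hx
  obtain ⟨i, hi, h⟩ := Finset.prod_eq_zero_iff.1 hx
  exact Finset.prod_eq_zero hi (hpq i _ h)

lemma DivSubadditive.map_fDiv_prod_le {G f : ℝ → ℝ} (hsub : DivSubadditive G f)
    {Y Z : Type*} [Fintype Y] [Fintype Z] {qY rY : Y → ℝ} {qZ rZ : Z → ℝ}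
    (hqY : IsPMF qY) (hrY : IsPMF rY) (hqZ : IsPMF qZ) (hrZ : IsPMF rZ)
    (hY : AbsCont qY rY) (hZ : AbsCont qZ rZ) :
    G (fDiv f (fun x : Y × Z ↦ qY x.1 * qZ x.2) (fun x : Y × Z ↦ rY x.1 * rZ x.2)) ≤
      G (fDiv f qY rY) + G (fDiv f qZ rZ) := by
  -- `DivSubadditive` quantifies over alphabets in `Type` only, so pass to `Fin (card _)`.
  let eY := (Fintype.equivFin Y).symm
  let eZ := (Fintype.equivFin Z).symm
  have h := hsub _ _ _ _ _ _ (hqY.comp_equiv eY) (hrY.comp_equiv eY) (hqZ.comp_equiv eZ)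
    (hrZ.comp_equiv eZ) (fun y ↦ hY (eY y)) (fun z ↦ hZ (eZ z))
  rw [fDiv_comp_equiv, fDiv_comp_equiv] at h
  rwa [← fDiv_comp_equiv f (eY.prodCongr eZ)]

lemma DivSubadditive.map_fDiv_prodPMF_fin_le {G f : ℝ → ℝ} (hsub : DivSubadditive G f)
    (hG0 : G 0 = 0) (hf1 : f 1 = 0) {n : ℕ} {X : Fin n → Type*} [∀ i, Fintype (X i)]
    {p q : ∀ i, X i → ℝ} (hp : ∀ i, IsPMF (p i)) (hq : ∀ i, IsPMF (q i))
    (hpq : ∀ i, AbsCont (p i) (q i)) :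
    G (fDiv f (prodPMF p) (prodPMF q)) ≤ ∑ i, G (fDiv f (p i) (q i)) := by
  induction n with
  | zero => simp [fDiv, prodPMF, hf1, hG0]
  | succ n ih =>
    have hsplit : ∀ r : ∀ i, X i → ℝ, prodPMF r ∘ Fin.consEquiv X =
        fun x ↦ r 0 x.1 * prodPMF (fun i : Fin n ↦ r i.succ) x.2 := fun r ↦ funext fun x ↦
      Fin.prod_univ_succ _
    have hhead := hsub.map_fDiv_prod_le (hp 0) (hq 0) (IsPMF.prodPMF fun i ↦ hp (Fin.succ i))
      (IsPMF.prodPMF fun i ↦ hq (Fin.succ i)) (hpq 0) (AbsCont.prodPMF fun i ↦ hpq (Fin.succ i))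
    have htail := ih (fun i ↦ hp i.succ) (fun i ↦ hq i.succ) fun i ↦ hpq i.succ
    rw [← hsplit, ← hsplit, fDiv_comp_equiv] at hhead
    rw [Fin.sum_univ_succ]
    linarith

lemma DivSubadditive.map_fDiv_prodPMF_le {G f : ℝ → ℝ} (hsub : DivSubadditive G f)
    (hG0 : G 0 = 0) (hf1 : f 1 = 0) {ι : Type*} [Fintype ι] [DecidableEq ι] {X : ι → Type*}
    [∀ i, Fintype (X i)] {p q : ∀ i, X i → ℝ} (hp : ∀ i, IsPMF (p i)) (hq : ∀ i, IsPMF (q i))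
    (hpq : ∀ i, AbsCont (p i) (q i)) :
    G (fDiv f (prodPMF p) (prodPMF q)) ≤ ∑ i, G (fDiv f (p i) (q i)) := by
  let e := (Fintype.equivFin ι).symm
  have hreindex : ∀ r : ∀ i, X i → ℝ,
      prodPMF r ∘ e.piCongrLeft X = prodPMF fun k ↦ r (e k) := fun r ↦ funext fun x ↦ by
    simp [prodPMF, ← e.prod_comp]
  have h := hsub.map_fDiv_prodPMF_fin_le hG0 hf1 (fun k ↦ hp (e k)) (fun k ↦ hq (e k))
    fun k ↦ hpq (e k)
  rwa [← hreindex, ← hreindex, fDiv_comp_equiv,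
    e.sum_comp fun i ↦ G (fDiv f (p i) (q i))] at h

end Product

theorem hypothesis_testing_bound_general {ι : Type*} [Fintype ι] [DecidableEq ι]
    {X : ι → Type*} [∀ i, Fintype (X i)] {U : Type*} [Fintype U] {G f : ℝ → ℝ}
    (hGf : Admissible G f) (hsub : DivSubadditive G f) {p q : ∀ i, X i → ℝ}
    (hp : ∀ i, IsPMF (p i)) (hq : ∀ i, IsPMF (q i)) (hpq : ∀ i, AbsCont (p i) (q i))
    {W : (∀ i, X i) → U → ℝ} (hW : ∀ x, IsPMF (W x)) :
    G (fDiv f (channelOutput (prodPMF p) W) (channelOutput (prodPMF q) W)) ≤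
      ∑ i, G (fDiv f (p i) (q i)) :=
  (hGf.map_fDiv_channelOutput_le (.prodPMF hp) (.prodPMF hq) (.prodPMF hpq) hW).trans
    (hsub.map_fDiv_prodPMF_le hGf.2.2.1 hGf.2.1 hp hq hpq)

/-- Binary hypothesis testing bound: for i.i.d. samples from `p` (resp. `q`) and a
randomized binary test `p_{U|Xⁿ}` with acceptance probabilities `α`, `β`, one has
`𝒟_{G,f}(Bern α‖Bern β) ≤ n · 𝒟_{G,f}(p‖q)` whenever `(G,f)` is an admissible
divergence-subadditive pair. -/
theorem hypothesis_testing_bound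
    {X : Type*} [Fintype X] (G f : ℝ → ℝ)
    (hGf : Admissible G f) (hsub : DivSubadditive G f)
    (p q : X → ℝ) (hp : IsPMF p) (hq : IsPMF q) (hpq : AbsCont p q)
    (n : ℕ) (hn : 1 ≤ n)
    (pU : (Fin n → X) → Bool → ℝ) (hU : ∀ xn, IsPMF (pU xn)) :
    let α : ℝ := ∑ xn : Fin n → X, (∏ i, p (xn i)) * pU xn true
    let β : ℝ := ∑ xn : Fin n → X, (∏ i, q (xn i)) * pU xn true
    0 < β → β < 1 →
      G (fDiv f (fun b : Bool => if b then α else 1 - α)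
                (fun b : Bool => if b then β else 1 - β)) ≤
        (n : ℝ) * G (fDiv f p q) := by
  intro _ _ _ _
  have h := hypothesis_testing_bound_general hGf hsub (fun _ : Fin n ↦ hp) (fun _ ↦ hq)
    (fun _ ↦ hpq) hU
  rw [channelOutput_bool (.prodPMF fun _ ↦ hp) hU, channelOutput_bool (.prodPMF fun _ ↦ hq) hU,
    Finset.sum_const, Finset.card_univ, Fintype.card_fin, nsmul_eq_mul] at h
  exact h
end

section
/- Let g : (0,∞) → [0,∞) be a nonnegative, twice differentiable function satisfying the functional-differential equation x²·g''(x) = g(α)·g(x/α) for all x > 0 and α > 0. Then there exists γ ∈ ℝ with γ ≥ 1 or γ ≤ 0 such that g(x) = γ(γ−1)·x^γ for all x > 0. -/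
/-!
The left-hand side of `x² g''(x) = g(α) g(x/α)` does not depend on `α`, so comparing with `α = 1`
gives `g(a) g(b) = g(1) g(ab)`. Hence either `g` vanishes or `g / g(1)` is a continuous
multiplicative function, that is, a power `x ^ γ` (its logarithm in exponential coordinates solves
Cauchy's equation). Inserting `g(x) = g(1) x ^ γ` at `x = α = 1` yields `g(1) = γ(γ - 1)`, and the
sign of `g(1)` decides which exponents occur.
-/

open Set Filter Topology

section Multiplicative

variable {u : ℝ → ℝ}

theorem pos_of_map_mul_of_pos (hmul : ∀ a, 0 < a → ∀ b, 0 < b → u (a * b) = u a * u b)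
    (h1 : u 1 ≠ 0) {x : ℝ} (hx : 0 < x) : 0 < u x := by
  have hsq : u x = u (√x) * u (√x) := by
    rw [← hmul _ (Real.sqrt_pos.2 hx) _ (Real.sqrt_pos.2 hx), Real.mul_self_sqrt hx.le]
  have hinv : u x * u x⁻¹ = u 1 := by
    rw [← hmul x hx x⁻¹ (inv_pos.2 hx), mul_inv_cancel₀ hx.ne']
  have hne : u x ≠ 0 := left_ne_zero_of_mul (hinv ▸ h1)
  exact lt_of_le_of_ne (hsq ▸ mul_self_nonneg _) hne.symm

theorem exists_eq_rpow_of_map_mul_of_pos (hcont : ContinuousOn u (Ioi 0))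
    (hmul : ∀ a, 0 < a → ∀ b, 0 < b → u (a * b) = u a * u b) (h1 : u 1 ≠ 0) :
    ∃ γ : ℝ, ∀ x, 0 < x → u x = x ^ γ := by
  have hpos {x : ℝ} (hx : 0 < x) : 0 < u x := pos_of_map_mul_of_pos hmul h1 hx
  let φ : ℝ →+ ℝ := AddMonoidHom.mk' (fun t ↦ Real.log (u (Real.exp t))) fun s t ↦ by
    rw [Real.exp_add, hmul _ s.exp_pos _ t.exp_pos,
      Real.log_mul (hpos s.exp_pos).ne' (hpos t.exp_pos).ne']
  have hφ : Continuous φ :=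
    (hcont.comp_continuous Real.continuous_exp Real.exp_pos).log fun t ↦ (hpos t.exp_pos).ne'
  have hlin (t : ℝ) : φ t = t * φ 1 := by simpa using map_real_smul φ hφ t 1
  refine ⟨φ 1, fun x hx ↦ ?_⟩
  calc u x = Real.exp (φ (Real.log x)) := by
        rw [AddMonoidHom.mk'_apply, Real.exp_log hx, Real.exp_log (hpos hx)]
    _ = x ^ φ 1 := by rw [hlin, Real.rpow_def_of_pos hx]

end Multiplicative

theorem map_mul_map_of_eq_mul_map_div {K M : Type*} [Semifield K] [LinearOrder K]
    [IsStrictOrderedRing K] [Mul M] {F g : K → M}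
    (h : ∀ x, 0 < x → ∀ α, 0 < α → F x = g α * g (x / α)) {a b : K} (ha : 0 < a) (hb : 0 < b) :
    g a * g b = g 1 * g (a * b) :=
  calc g a * g b = F (a * b) := by rw [h _ (mul_pos ha hb) a ha, mul_div_cancel_left₀ b ha.ne']
    _ = g 1 * g (a * b) := by rw [h _ (mul_pos ha hb) 1 one_pos, div_one]

theorem exists_eq_map_one_mul_rpow {g : ℝ → ℝ} (hcont : ContinuousOn g (Ioi 0))
    (hmul : ∀ a, 0 < a → ∀ b, 0 < b → g a * g b = g 1 * g (a * b)) :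
    ∃ γ : ℝ, ∀ x, 0 < x → g x = g 1 * x ^ γ := by
  rcases eq_or_ne (g 1) 0 with h1 | h1
  · refine ⟨0, fun x hx ↦ ?_⟩
    have hsq : g x * g x = 0 := by rw [hmul x hx x hx, h1, zero_mul]
    rw [mul_self_eq_zero.1 hsq, h1, zero_mul]
  · obtain ⟨γ, hγ⟩ := exists_eq_rpow_of_map_mul_of_pos (u := fun x ↦ g x / g 1)
      (hcont.div_const _)
      (fun a ha b hb ↦ by rw [div_mul_div_comm, hmul a ha b hb, mul_div_mul_left _ _ h1])
      (div_ne_zero h1 h1)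
    exact ⟨γ, fun x hx ↦ by rw [← hγ x hx, mul_div_cancel₀ _ h1]⟩

theorem hasDerivAt_eq_of_eq_mul_rpow {f : ℝ → ℝ} {c p d x : ℝ}
    (hf : ∀ y, 0 < y → f y = c * y ^ p) (hx : 0 < x) (hd : HasDerivAt f d x) :
    d = c * p * x ^ (p - 1) := by
  have hpow : HasDerivAt (fun y ↦ c * y ^ p) (c * (p * x ^ (p - 1))) x :=
    (Real.hasDerivAt_rpow_const (Or.inl hx.ne')).const_mul c
  have heq : f =ᶠ[𝓝 x] fun y ↦ c * y ^ p := eventually_of_mem (Ioi_mem_nhds hx) hf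
  rw [mul_assoc, hd.unique (hpow.congr_of_eventuallyEq heq)]

theorem functional_equation_solution_general
    (g g' g'' : ℝ → ℝ)
    (hg' : ∀ x : ℝ, 0 < x → HasDerivAt g (g' x) x)
    (hg'' : ∀ x : ℝ, 0 < x → HasDerivAt g' (g'' x) x)
    (heq : ∀ x : ℝ, 0 < x → ∀ α : ℝ, 0 < α → x ^ 2 * g'' x = g α * g (x / α)) :
    ∃ γ : ℝ, ∀ x : ℝ, 0 < x → g x = γ * (γ - 1) * x ^ γ := by
  have hcont : ContinuousOn g (Ioi 0) := HasDerivAt.continuousOn hg'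
  obtain ⟨γ, hγ⟩ := exists_eq_map_one_mul_rpow hcont fun a ha b hb ↦
    map_mul_map_of_eq_mul_map_div heq ha hb
  rcases eq_or_ne (g 1) 0 with h1 | h1
  · exact ⟨0, fun x hx ↦ by rw [hγ x hx, h1, zero_mul, zero_mul, zero_mul]⟩
  have hγ' (x : ℝ) (hx : 0 < x) : g' x = g 1 * γ * x ^ (γ - 1) :=
    hasDerivAt_eq_of_eq_mul_rpow hγ hx (hg' x hx)
  have hγ'' : g'' 1 = g 1 * (γ * (γ - 1)) := by
    simpa only [Real.one_rpow, mul_one, mul_assoc] using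
      hasDerivAt_eq_of_eq_mul_rpow hγ' one_pos (hg'' 1 one_pos)
  have hsq : g'' 1 = g 1 * g 1 := by
    simpa only [one_pow, one_mul, div_one] using heq 1 one_pos 1 one_pos
  have hcoeff : g 1 = γ * (γ - 1) := mul_left_cancel₀ h1 (hsq.symm.trans hγ'')
  exact ⟨γ, fun x hx ↦ hcoeff ▸ hγ x hx⟩

/-- The only nonnegative solutions of the functional-differential equation
`x² g''(x) = g(α) g(x/α)` (for all `x, α > 0`) are `g(x) = γ(γ−1) x^γ`
with `γ ≥ 1` or `γ ≤ 0`. -/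
theorem functional_equation_solution
    (g g' g'' : ℝ → ℝ)
    (hg_nonneg : ∀ x : ℝ, 0 < x → 0 ≤ g x)
    (hg' : ∀ x : ℝ, 0 < x → HasDerivAt g (g' x) x)
    (hg'' : ∀ x : ℝ, 0 < x → HasDerivAt g' (g'' x) x)
    (heq : ∀ x : ℝ, 0 < x → ∀ α : ℝ, 0 < α → x ^ 2 * g'' x = g α * g (x / α)) :
    ∃ γ : ℝ, (1 ≤ γ ∨ γ ≤ 0) ∧ ∀ x : ℝ, 0 < x → g x = γ * (γ - 1) * x ^ γ := by
  obtain ⟨γ, hγ⟩ := functional_equation_solution_general g g' g'' hg' hg'' heq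
  have hcoeff : 0 ≤ γ * (γ - 1) := by simpa [hγ 1 one_pos] using hg_nonneg 1 one_pos
  exact ⟨γ, (mul_nonneg_iff.1 hcoeff).imp (sub_nonneg.1 ·.2) (·.1), hγ⟩
end

section
/- Let β ≥ 0 and let Q : [0,∞) → [0,∞) be a nonnegative, twice differentiable function satisfying x·Q''(x) + β·Q'(x) ≤ 0 for all x > 0. Then: if 0 ≤ β < 1, Q is non-decreasing on (0,∞); if β > 1, Q is non-increasing on (0,∞); and if β = 1, Q is constant on (0,∞). -/
/-!
In the variable `t = log x` the inequality `x Q'' + β Q' ≤ 0` becomes `f'' + (β - 1) f' ≤ 0` for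
`f t = Q (exp t)`, so that `exp ((β - 1) t) * f' t` is antitone. If `β ≤ 1` and `f' a < 0`, this
forces `f' t ≤ f' a` for all `t ≥ a`, and `f` lies below a line of negative slope, which is
impossible for a function bounded below. The reflection `t ↦ -t` changes the sign of `β - 1` and
gives the case `1 ≤ β`.
-/

open Real Set

section

variable {f f' : ℝ → ℝ} {c : ℝ}

theorem antitone_exp_mul_of_deriv_add_mul_nonpos (hf : ∀ t, HasDerivAt f (f' t) t)
    (h : ∀ t, f' t + c * f t ≤ 0) : Antitone fun t ↦ exp (c * t) * f t := by
  have hderiv (t : ℝ) :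
      HasDerivAt (fun t ↦ exp (c * t) * f t) (exp (c * t) * (f' t + c * f t)) t := by
    convert! (hasDerivAt_const_mul c).exp.mul (hf t) using 1
    ring
  exact antitone_of_hasDerivAt_nonpos hderiv fun t ↦
    mul_nonpos_of_nonneg_of_nonpos (exp_pos _).le (h t)

theorem not_bddBelow_image_Ici_of_deriv_le_neg {a m : ℝ} (hm : m < 0)
    (hf : ∀ t ∈ Ici a, HasDerivAt f (f' t) t) (hf' : ∀ t ∈ Ici a, f' t ≤ m) :
    ¬ BddBelow (f '' Ici a) := by
  rintro ⟨b, hb⟩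
  have below_line (t : ℝ) (ht : a ≤ t) : f t - f a ≤ m * (t - a) := by
    refine (convex_Ici a).image_sub_le_mul_sub_of_deriv_le
      (fun x hx ↦ (hf x hx).continuousAt.continuousWithinAt)
      (fun x hx ↦ (hf x (interior_subset hx)).differentiableAt.differentiableWithinAt)
      (fun x hx ↦ ?_) a self_mem_Ici t ht ht
    rw [(hf x (interior_subset hx)).deriv]
    exact hf' x (interior_subset hx)
  have line_tendsto : Filter.Tendsto (fun t ↦ m * (t - a)) Filter.atTop Filter.atBot :=
    (Filter.tendsto_atTop_add_const_right _ (-a) Filter.tendsto_id).const_mul_atTop_of_neg hm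
  obtain ⟨t, ht, hat⟩ := ((line_tendsto.eventually_lt_atBot (b - f a)).and
    (Filter.eventually_ge_atTop a)).exists
  linarith [below_line t hat, hb (mem_image_of_mem f hat)]

variable {f'' : ℝ → ℝ}

theorem monotone_of_deriv2_add_mul_deriv_nonpos (hc : c ≤ 0) (hbdd : BddBelow (range f))
    (hf : ∀ t, HasDerivAt f (f' t) t) (hf' : ∀ t, HasDerivAt f' (f'' t) t)
    (h : ∀ t, f'' t + c * f' t ≤ 0) : Monotone f := by
  refine monotone_of_hasDerivAt_nonneg hf fun a ↦ ?_
  by_contra! ha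
  have slope_le (t : ℝ) (ht : a ≤ t) : f' t ≤ f' a := by
    have hexp : exp (c * t) ≤ exp (c * a) := exp_le_exp.2 (mul_le_mul_of_nonpos_left ht hc)
    refine le_of_mul_le_mul_left ?_ (exp_pos (c * t))
    calc exp (c * t) * f' t ≤ exp (c * a) * f' a :=
          antitone_exp_mul_of_deriv_add_mul_nonpos hf' h ht
      _ ≤ exp (c * t) * f' a := mul_le_mul_of_nonpos_right hexp ha.le
  exact not_bddBelow_image_Ici_of_deriv_le_neg ha (fun t _ ↦ hf t) slope_le
    (hbdd.mono (image_subset_range f _))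

theorem antitone_of_deriv2_add_mul_deriv_nonpos (hc : 0 ≤ c) (hbdd : BddBelow (range f))
    (hf : ∀ t, HasDerivAt f (f' t) t) (hf' : ∀ t, HasDerivAt f' (f'' t) t)
    (h : ∀ t, f'' t + c * f' t ≤ 0) : Antitone f := by
  have hasDerivAt_reflect {g g' : ℝ → ℝ} (hg : ∀ t, HasDerivAt g (g' t) t) (t : ℝ) :
      HasDerivAt (fun t ↦ g (-t)) (-g' (-t)) t := by
    simpa only [mul_neg_one] using! (hg (-t)).comp t (hasDerivAt_neg t)
  have reflect_monotone : Monotone fun t ↦ f (-t) :=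
    monotone_of_deriv2_add_mul_deriv_nonpos (neg_nonpos.2 hc)
      (hbdd.mono (range_comp_subset_range Neg.neg f)) (hasDerivAt_reflect hf)
      (fun t ↦ (hasDerivAt_reflect hf' t).neg)
      (fun t ↦ by simpa only [neg_neg, neg_mul_neg] using h (-t))
  intro a b hab
  simpa only [neg_neg] using reflect_monotone (neg_le_neg hab)

end

section

variable {α : Type*} [Preorder α] {f : ℝ → α}

theorem monotoneOn_Ioi_zero_of_monotone_comp_exp (h : Monotone (f ∘ exp)) :
    MonotoneOn f (Ioi 0) :=
  (h.comp_monotoneOn strictMonoOn_log.monotoneOn).congr fun _ hx ↦ congrArg f (exp_log hx)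

theorem antitoneOn_Ioi_zero_of_antitone_comp_exp (h : Antitone (f ∘ exp)) :
    AntitoneOn f (Ioi 0) :=
  monotoneOn_Ioi_zero_of_monotone_comp_exp (α := αᵒᵈ) h

end

theorem monotonicity_from_differential_inequality_general
    (β : ℝ) (Q Q' Q'' : ℝ → ℝ) (hQ_bdd : BddBelow (Q '' Ioi 0))
    (hQ' : ∀ x ∈ Ioi (0 : ℝ), HasDerivAt Q (Q' x) x)
    (hQ'' : ∀ x ∈ Ioi (0 : ℝ), HasDerivAt Q' (Q'' x) x)
    (hineq : ∀ x : ℝ, 0 < x → x * Q'' x + β * Q' x ≤ 0) :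
    (β ≤ 1 → MonotoneOn Q (Ioi 0)) ∧ (1 ≤ β → AntitoneOn Q (Ioi 0)) := by
  have hbdd : BddBelow (range (Q ∘ exp)) := by rwa [range_comp, range_exp]
  have hderiv (t : ℝ) : HasDerivAt (Q ∘ exp) (Q' (exp t) * exp t) t :=
    (hQ' _ (exp_pos t)).comp t (hasDerivAt_exp t)
  have hderiv2 (t : ℝ) : HasDerivAt (fun t ↦ Q' (exp t) * exp t)
      (Q'' (exp t) * exp t * exp t + Q' (exp t) * exp t) t :=
    ((hQ'' _ (exp_pos t)).comp t (hasDerivAt_exp t)).mul (hasDerivAt_exp t)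
  have hineq_exp (t : ℝ) : Q'' (exp t) * exp t * exp t + Q' (exp t) * exp t
      + (β - 1) * (Q' (exp t) * exp t) ≤ 0 := by
    linarith [mul_nonpos_of_nonneg_of_nonpos (exp_pos t).le (hineq _ (exp_pos t))]
  exact ⟨fun hβ ↦ monotoneOn_Ioi_zero_of_monotone_comp_exp <|
      monotone_of_deriv2_add_mul_deriv_nonpos (sub_nonpos.2 hβ) hbdd hderiv hderiv2 hineq_exp,
    fun hβ ↦ antitoneOn_Ioi_zero_of_antitone_comp_exp <|
      antitone_of_deriv2_add_mul_deriv_nonpos (sub_nonneg.2 hβ) hbdd hderiv hderiv2 hineq_exp⟩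

/-- Monotonicity from the differential inequality `x Q''(x) + β Q'(x) ≤ 0` for a
nonnegative `Q` on `[0,∞)`: if `0 ≤ β < 1` then `Q` is non-decreasing on `(0,∞)`,
if `β > 1` then `Q` is non-increasing on `(0,∞)`, and if `β = 1` then `Q` is
constant on `(0,∞)`. -/
theorem monotonicity_from_differential_inequality
    (β : ℝ) (hβ : 0 ≤ β) (Q Q' Q'' : ℝ → ℝ)
    (hQ_nonneg : ∀ x : ℝ, 0 ≤ x → 0 ≤ Q x)
    (hQ' : ∀ x ∈ Set.Ici (0 : ℝ), HasDerivWithinAt Q (Q' x) (Set.Ici 0) x)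
    (hQ'' : ∀ x ∈ Set.Ici (0 : ℝ), HasDerivWithinAt Q' (Q'' x) (Set.Ici 0) x)
    (hineq : ∀ x : ℝ, 0 < x → x * Q'' x + β * Q' x ≤ 0) :
    (β < 1 → MonotoneOn Q (Set.Ioi 0)) ∧
    (1 < β → AntitoneOn Q (Set.Ioi 0)) ∧
    (β = 1 → ∀ x ∈ Set.Ioi (0 : ℝ), ∀ y ∈ Set.Ioi (0 : ℝ), Q x = Q y) := by
  obtain ⟨hmono, hanti⟩ := monotonicity_from_differential_inequality_general β Q Q' Q''
    ⟨0, forall_mem_image.2 fun x hx ↦ hQ_nonneg x hx.out.le⟩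
    (fun x hx ↦ (hQ' x hx.out.le).hasDerivAt (Ici_mem_nhds hx))
    (fun x hx ↦ (hQ'' x hx.out.le).hasDerivAt (Ici_mem_nhds hx)) hineq
  exact ⟨fun h ↦ hmono h.le, fun h ↦ hanti h.le, fun h x hx y hy ↦
    constant_of_monotoneOn_antitoneOn (hmono h.le) (hanti h.ge)
      (.of_linearOrder _) hx hy⟩
end
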